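/- Let d ≥ 1, let ρ̄ satisfy assumption (T), let ζ satisfy assumption (M), and let V satisfy assumption (V). Then for every Borel probability measure ρ on ℝ^d, lim_{ε→0} [ E_ε(ρ) + ∫ (ζ_ε*V) dρ ] = E(ρ) + ∫ V dρ, as elements of the extended reals (in particular, if E(ρ) = +∞ then E_ε(ρ) + ∫(ζ_ε*V)dρ → +∞). -/

import Mathlib

/-!
Since `V` is bounded and continuous, `ζ_ε * V → V` pointwise and boundedly, so the potential part
converges by dominated convergence. The sum in the extended reals is continuous at the limit because
`∫ V dρ` is finite, so it remains to show `E_ε(ρ) → E(ρ)` in `[0, ∞]`.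

*Lower bound* (`intEnergy_le_liminf`). Write `u_ε = ζ_ε * ρ`. Young's inequality gives
`∫ g u_ε ≤ E_ε(ρ) + ½ ∫ g² ρ̄`, and `∫ g u_ε = ∫ (ζ_ε * g) dρ → ∫ g dρ` for bounded continuous
`g ≥ 0` since `ζ` is even. Hence `∫ g dρ ≤ liminf E_ε(ρ) + ½ ∫ g² ρ̄`, and by density of bounded
continuous functions in `L²(ρ + ρ̄ dx)` the inequality `∫ |h| dρ ≤ liminf E_ε(ρ) + ½ ∫ h² ρ̄` holds
for every `h` in that space (`eLpNorm_le_liminf`). If `ρ` charges a Lebesgue-null set `A`, then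
`h = n 1_A` forces the liminf to be infinite. If `ρ = f dx`, truncations of `h = f / ρ̄` give
`½ ∫ f² / ρ̄ ≤ liminf E_ε(ρ)`.

*Upper bound* (`limsup_le_intEnergy`). If `ρ = f dx` has finite energy, then Jensen's inequality
gives `u_ε² ≤ ζ_ε * f²`, so that `∫ u_ε² / ρ̄ ≤ ∫ f² (ζ_ε * (1/ρ̄))`, which tends to `∫ f² / ρ̄` by
dominated convergence, as `1/ρ̄` is bounded and continuous and `f²` is integrable.
-/

open MeasureTheory Filter Topology Metric
open scoped ENNReal RealInnerProductSpace Classical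

noncomputable section

/-- Euclidean space `ℝ^d`. -/
abbrev Ed (d : ℕ) := EuclideanSpace ℝ (Fin d)

/-- Rescaled mollifier `ζ_ε(x) = ε^{-d} ζ(x/ε)`. -/
def zE {d : ℕ} (ζ : Ed d → ℝ) (ε : ℝ) (x : Ed d) : ℝ :=
  (ε ^ d)⁻¹ * ζ (ε⁻¹ • x)

/-- Convolution `ζ_ε * μ` of the rescaled mollifier with a measure. -/
def convM {d : ℕ} (ζ : Ed d → ℝ) (ε : ℝ) (μ : Measure (Ed d)) (x : Ed d) : ℝ :=
  ∫ y, zE ζ ε (x - y) ∂μ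

/-- Convolution `ζ_ε * f` of the rescaled mollifier with a function. -/
def convF {d : ℕ} (ζ : Ed d → ℝ) (ε : ℝ) (f : Ed d → ℝ) (x : Ed d) : ℝ :=
  ∫ y, zE ζ ε (x - y) * f y

/-- `(∇ζ_ε) * μ`, the gradient of the mollified measure. -/
def gradConvM {d : ℕ} (ζ : Ed d → ℝ) (ε : ℝ) (μ : Measure (Ed d)) (x : Ed d) : Ed d :=
  ∫ y, gradient (zE ζ ε) (x - y) ∂μ

/-- `∇ζ_ε * ((ζ_ε*μ)/ρ̄)`. -/
def opT {d : ℕ} (ζ : Ed d → ℝ) (ε : ℝ) (ρb : Ed d → ℝ) (μ : Measure (Ed d)) (x : Ed d) : Ed d :=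
  ∫ z, ((convM ζ ε μ z) / ρb z) • gradient (zE ζ ε) (x - z)

/-- Assumption (T): `ρ̄ ∈ C¹` and `1/C ≤ ρ̄ ≤ C`. -/
def AssumptionT {d : ℕ} (ρb : Ed d → ℝ) : Prop :=
  ContDiff ℝ 1 ρb ∧ ∃ C : ℝ, 0 < C ∧ ∀ x, C⁻¹ ≤ ρb x ∧ ρb x ≤ C

/-- Assumption (M) on the mollifier. -/
def AssumptionM {d : ℕ} (ζ : Ed d → ℝ) : Prop :=
  ContDiff ℝ 2 ζ ∧ (∀ x, ζ (-x) = ζ x) ∧ (∀ x, 0 ≤ ζ x) ∧ ((∫ x, ζ x) = 1) ∧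
    (∃ M : ℝ, ∀ x, ‖iteratedFDeriv ℝ 2 ζ x‖ ≤ M) ∧
    ∃ Cz : ℝ, 0 < Cz ∧ ∃ q q' : ℝ, (d : ℝ) + 1 < q ∧ (d : ℝ) < q' ∧
      ∀ x : Ed d, x ≠ 0 → ζ x ≤ Cz * ‖x‖ ^ (-q) ∧ ‖gradient ζ x‖ ≤ Cz * ‖x‖ ^ (-q')

/-- Assumption (V) on the external potential. -/
def AssumptionV {d : ℕ} (V : Ed d → ℝ) : Prop :=
  ContDiff ℝ 2 V ∧ Integrable V ∧ (∃ M : ℝ, ∀ x, |V x| ≤ M) ∧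
    (∃ M : ℝ, ∀ x, ‖gradient V x‖ ≤ M) ∧
    ∃ lam : ℝ, ∀ x v, lam * ‖v‖ ^ 2 ≤ fderiv ℝ (fun y => fderiv ℝ V y) x v v

/-- Assumption (C) on a confining potential. -/
def AssumptionC {d : ℕ} (W : Ed d → ℝ) : Prop :=
  (∀ x, 0 ≤ W x) ∧ ConvexOn ℝ Set.univ W ∧ ContDiff ℝ 2 W ∧
    ∃ M : ℝ, ∀ x, ‖iteratedFDeriv ℝ 2 W x‖ ≤ M

/-- Assumption (Ck) on the family of confining potentials. -/
def AssumptionCk {d : ℕ} (Ω : Set (Ed d)) (W : ℕ → Ed d → ℝ) : Prop :=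
  (∀ k, ∀ x ∈ Ω, W k x = 0) ∧
    ∀ (c : Ed d) (r : ℝ), 0 < r → closure (ball c r) ⊆ (closure Ω)ᶜ →
      Tendsto (fun k => sInf ((W k) '' (ball c r))) atTop atTop

/-- Narrow convergence of a sequence of measures. -/
def NarrowTendsto {d : ℕ} (μn : ℕ → Measure (Ed d)) (μ : Measure (Ed d)) : Prop :=
  ∀ f : Ed d → ℝ, Continuous f → (∃ M : ℝ, ∀ x, |f x| ≤ M) →
    Tendsto (fun n => ∫ x, f x ∂(μn n)) atTop (𝓝 (∫ x, f x ∂μ))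

/-- The internal energy `E`, with values in `[0,∞]`. -/
def intEnergy {d : ℕ} (ρb : Ed d → ℝ) (μ : Measure (Ed d)) : ℝ≥0∞ :=
  if μ ≪ (volume : Measure (Ed d)) then
    2⁻¹ * ∫⁻ x, (μ.rnDeriv volume x) ^ 2 / ENNReal.ofReal (ρb x)
  else ⊤

/-- The regularized internal energy `E_ε`, with values in `[0,∞]`. -/
def regEnergyE {d : ℕ} (ζ : Ed d → ℝ) (ε : ℝ) (ρb : Ed d → ℝ) (μ : Measure (Ed d)) : ℝ≥0∞ :=
  2⁻¹ * ∫⁻ x, ENNReal.ofReal ((convM ζ ε μ x) ^ 2 / ρb x)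

/-- The regularized internal energy `E_ε`, real-valued. -/
def regEnergyR {d : ℕ} (ζ : Ed d → ℝ) (ε : ℝ) (ρb : Ed d → ℝ) (μ : Measure (Ed d)) : ℝ :=
  (∫ x, (convM ζ ε μ x) ^ 2 / ρb x) / 2

/-- Confinement energy `𝒱_Ω`. -/
def confE {d : ℕ} (Ω : Set (Ed d)) (μ : Measure (Ed d)) : ℝ≥0∞ :=
  if μ ((closure Ω)ᶜ) = 0 then 0 else ⊤

/-- The limit energy `F = E + 𝒱 + 𝒱_Ω`, with values in the extended reals. -/
def Flim {d : ℕ} (ρb V : Ed d → ℝ) (Ω : Set (Ed d)) (μ : Measure (Ed d)) : EReal :=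
  (intEnergy ρb μ : EReal) + ((∫ x, V x ∂μ : ℝ) : EReal) + (confE Ω μ : EReal)

/-- The regularized energy `F_{ε,k} = E_ε + 𝒱_ε + 𝒱_k`, with values in the extended reals. -/
def Fek {d : ℕ} (ζ : Ed d → ℝ) (ε : ℝ) (ρb V W : Ed d → ℝ) (μ : Measure (Ed d)) : EReal :=
  (regEnergyE ζ ε ρb μ : EReal) + ((∫ x, convF ζ ε V x ∂μ : ℝ) : EReal) +
    ((∫⁻ x, ENNReal.ofReal (W x) ∂μ : ℝ≥0∞) : EReal)



/-! ### The mollifier -/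

lemma AssumptionM.bounded {d : ℕ} {ζ : Ed d → ℝ} (hM : AssumptionM ζ) : ∃ B : ℝ, ∀ x, ζ x ≤ B := by
  obtain ⟨hc, -, -, -, -, Cz, hCz, q, q', hq, -, hb⟩ := hM
  obtain ⟨B, hB⟩ := (isCompact_closedBall (0 : Ed d) 1).exists_bound_of_continuousOn
    hc.continuous.continuousOn
  refine ⟨max B Cz, fun x => ?_⟩
  by_cases hx : ‖x‖ ≤ 1
  · exact le_max_of_le_left ((le_abs_self _).trans (hB x (by simpa using hx)))
  · push Not at hx
    have hx0 : x ≠ 0 := by rintro rfl; simp at hx; linarith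
    refine le_max_of_le_right ((hb x hx0).1.trans ?_)
    have h1 : ‖x‖ ^ (-q) ≤ 1 :=
      Real.rpow_le_one_of_one_le_of_nonpos hx.le (by have := Nat.cast_nonneg (α := ℝ) d; linarith)
    nlinarith

lemma AssumptionM.integrable {d : ℕ} {ζ : Ed d → ℝ} (hM : AssumptionM ζ) : Integrable ζ := by
  by_contra h
  have := hM.2.2.2.1
  rw [integral_undef h] at this
  exact zero_ne_one this

lemma zE_continuous {d : ℕ} {ζ : Ed d → ℝ} (hM : AssumptionM ζ) (ε : ℝ) :
    Continuous (zE ζ ε) := by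
  have := hM.1.continuous
  unfold zE
  fun_prop

lemma zE_nonneg {d : ℕ} {ζ : Ed d → ℝ} (hM : AssumptionM ζ) {ε : ℝ} (hε : 0 < ε) (x : Ed d) :
    0 ≤ zE ζ ε x :=
  mul_nonneg (by positivity) (hM.2.2.1 _)

lemma zE_sub_comm {d : ℕ} {ζ : Ed d → ℝ} (hM : AssumptionM ζ) (ε : ℝ) (x y : Ed d) :
    zE ζ ε (x - y) = zE ζ ε (y - x) := by
  unfold zE
  rw [← hM.2.1, ← smul_neg, neg_sub]

lemma zE_integrable_measure {d : ℕ} {ζ : Ed d → ℝ} (hM : AssumptionM ζ) {ε : ℝ} (hε : 0 < ε)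
    (x : Ed d) (ρ : Measure (Ed d)) [IsProbabilityMeasure ρ] :
    Integrable (fun y => zE ζ ε (x - y)) ρ := by
  obtain ⟨B, hB⟩ := hM.bounded
  have hc := zE_continuous hM ε
  refine Integrable.of_bound (C := (ε ^ d)⁻¹ * B)
    (by fun_prop : Continuous fun y => zE ζ ε (x - y)).aestronglyMeasurable
    (Eventually.of_forall fun y => ?_)
  rw [Real.norm_of_nonneg (zE_nonneg hM hε _)]
  exact mul_le_mul_of_nonneg_left (hB _) (by positivity)

/-- The change of variables `y = x - εz`. -/
lemma convF_eq {d : ℕ} (ζ : Ed d → ℝ) {ε : ℝ} (hε : 0 < ε) (g : Ed d → ℝ) (x : Ed d) :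
    convF ζ ε g x = ∫ z, ζ z * g (x - ε • z) := by
  unfold convF zE
  rw [← integral_sub_left_eq_self _ volume x]
  have h := Measure.integral_comp_inv_smul (volume : Measure (Ed d))
    (fun z => ζ z * g (x - ε • z)) ε
  simp only [smul_inv_smul₀ hε.ne', finrank_euclideanSpace, Fintype.card_fin, smul_eq_mul,
    abs_of_pos (pow_pos hε d)] at h
  simp only [sub_sub_cancel, mul_assoc]
  rw [integral_const_mul, h, inv_mul_cancel_left₀ (by positivity)]

lemma zE_integral {d : ℕ} {ζ : Ed d → ℝ} (hM : AssumptionM ζ) {ε : ℝ} (hε : 0 < ε) (x : Ed d) :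
    ∫ y, zE ζ ε (x - y) = 1 := by
  have := convF_eq ζ hε (fun _ => 1) x
  simpa [convF, hM.2.2.2.1] using this

lemma zE_integrable {d : ℕ} {ζ : Ed d → ℝ} (hM : AssumptionM ζ) {ε : ℝ} (hε : 0 < ε) (x : Ed d) :
    Integrable (fun y => zE ζ ε (x - y)) := by
  by_contra h
  have := zE_integral hM hε x
  rw [integral_undef h] at this
  exact zero_ne_one this

lemma lintegral_zE {d : ℕ} {ζ : Ed d → ℝ} (hM : AssumptionM ζ) {ε : ℝ} (hε : 0 < ε) (x : Ed d) :
    ∫⁻ y, ENNReal.ofReal (zE ζ ε (x - y)) = 1 := by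
  rw [← ofReal_integral_eq_lintegral_ofReal (zE_integrable hM hε x)
    (Eventually.of_forall fun y => zE_nonneg hM hε _), zE_integral hM hε, ENNReal.ofReal_one]

lemma ofReal_convM {d : ℕ} {ζ : Ed d → ℝ} (hM : AssumptionM ζ) {ε : ℝ} (hε : 0 < ε)
    (ρ : Measure (Ed d)) [IsProbabilityMeasure ρ] (x : Ed d) :
    ENNReal.ofReal (convM ζ ε ρ x) = ∫⁻ y, ENNReal.ofReal (zE ζ ε (x - y)) ∂ρ :=
  ofReal_integral_eq_lintegral_ofReal (zE_integrable_measure hM hε x ρ)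
    (Eventually.of_forall fun _ => zE_nonneg hM hε _)

lemma convM_nonneg {d : ℕ} {ζ : Ed d → ℝ} (hM : AssumptionM ζ) {ε : ℝ} (hε : 0 < ε)
    (ρ : Measure (Ed d)) (x : Ed d) : 0 ≤ convM ζ ε ρ x :=
  integral_nonneg fun _ => zE_nonneg hM hε _

lemma measurable_convM {d : ℕ} {ζ : Ed d → ℝ} (hM : AssumptionM ζ) (ε : ℝ)
    (ρ : Measure (Ed d)) [IsProbabilityMeasure ρ] : Measurable (convM ζ ε ρ) := by
  have hc := zE_continuous hM ε
  have : StronglyMeasurable (fun p : Ed d × Ed d => zE ζ ε (p.1 - p.2)) :=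
    (by fun_prop : Continuous fun p : Ed d × Ed d => zE ζ ε (p.1 - p.2)).stronglyMeasurable
  exact this.integral_prod_right.measurable

/-! ### Mollification of bounded continuous functions -/

lemma measurable_convF {d : ℕ} {ζ : Ed d → ℝ} (hM : AssumptionM ζ) (ε : ℝ)
    {g : Ed d → ℝ} (hg : Continuous g) : Measurable (convF ζ ε g) := by
  have hc := zE_continuous hM ε
  have : StronglyMeasurable (fun p : Ed d × Ed d => zE ζ ε (p.1 - p.2) * g p.2) :=
    (by fun_prop : Continuous
      fun p : Ed d × Ed d => zE ζ ε (p.1 - p.2) * g p.2).stronglyMeasurable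
  exact this.integral_prod_right.measurable

lemma abs_convF_le {d : ℕ} {ζ : Ed d → ℝ} (hM : AssumptionM ζ) {ε : ℝ} (hε : 0 < ε)
    {g : Ed d → ℝ} {B : ℝ} (hB : ∀ x, |g x| ≤ B) (x : Ed d) :
    |convF ζ ε g x| ≤ B := by
  have h := norm_integral_le_of_norm_le ((zE_integrable hM hε x).mul_const B)
    (f := fun y => zE ζ ε (x - y) * g y) (Eventually.of_forall fun y => by
      rw [norm_mul, Real.norm_of_nonneg (zE_nonneg hM hε _)]
      exact mul_le_mul_of_nonneg_left (hB y) (zE_nonneg hM hε _))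
  rwa [integral_mul_const, zE_integral hM hε, one_mul] at h

lemma tendsto_convF {d : ℕ} {ζ : Ed d → ℝ} (hM : AssumptionM ζ)
    {g : Ed d → ℝ} (hg : Continuous g) {B : ℝ} (hB : ∀ x, |g x| ≤ B) (x : Ed d) :
    Tendsto (fun ε => convF ζ ε g x) (𝓝[>] 0) (𝓝 (g x)) := by
  have hc := hM.1.continuous
  have key : Tendsto (fun ε : ℝ => ∫ z, ζ z * g (x - ε • z)) (𝓝[>] 0)
      (𝓝 (∫ z, ζ z * g x)) := by
    refine tendsto_integral_filter_of_dominated_convergence (fun z => ζ z * B)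
      (Eventually.of_forall fun ε => (by fun_prop :
        Continuous fun z => ζ z * g (x - ε • z)).aestronglyMeasurable)
      (Eventually.of_forall fun ε => Eventually.of_forall fun z => ?_)
      (hM.integrable.mul_const B) (Eventually.of_forall fun z => ?_)
    · rw [norm_mul, Real.norm_of_nonneg (hM.2.2.1 z)]
      exact mul_le_mul_of_nonneg_left (hB _) (hM.2.2.1 z)
    · have : Continuous fun ε : ℝ => ζ z * g (x - ε • z) := by fun_prop
      have h0 := (this.tendsto 0).mono_left (nhdsWithin_le_nhds (s := Set.Ioi 0))
      simpa using h0
  rw [integral_mul_const, hM.2.2.2.1, one_mul] at key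
  exact key.congr' (eventually_mem_nhdsWithin.mono fun ε hε => (convF_eq ζ hε g x).symm)

lemma tendsto_integral_convF {d : ℕ} {ζ : Ed d → ℝ} (hM : AssumptionM ζ)
    {g : Ed d → ℝ} (hg : Continuous g) {B : ℝ} (hB : ∀ x, |g x| ≤ B)
    (ρ : Measure (Ed d)) [IsProbabilityMeasure ρ] :
    Tendsto (fun ε => ∫ x, convF ζ ε g x ∂ρ) (𝓝[>] 0) (𝓝 (∫ x, g x ∂ρ)) :=
  tendsto_integral_filter_of_dominated_convergence (fun _ => B)
    (Eventually.of_forall fun ε => (measurable_convF hM ε hg).aestronglyMeasurable)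
    (eventually_mem_nhdsWithin.mono fun _ hε => Eventually.of_forall fun x =>
      abs_convF_le hM hε hB x)
    (integrable_const B) (Eventually.of_forall fun x => tendsto_convF hM hg hB x)

/-- Convergence of mollified integrals against a weight `φ` of finite mass; the measure `μ` need
not be finite. -/
lemma tendsto_lintegral_convF {d : ℕ} {ζ : Ed d → ℝ} (hM : AssumptionM ζ)
    {g : Ed d → ℝ} (hg : Continuous g) {B : ℝ} (hB : ∀ x, |g x| ≤ B)
    (μ : Measure (Ed d)) {φ : Ed d → ℝ≥0∞} (hφ : Measurable φ) (hfin : ∫⁻ x, φ x ∂μ ≠ ⊤) :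
    Tendsto (fun ε => ∫⁻ x, φ x * ENNReal.ofReal (convF ζ ε g x) ∂μ) (𝓝[>] 0)
      (𝓝 (∫⁻ x, φ x * ENNReal.ofReal (g x) ∂μ)) := by
  refine tendsto_lintegral_filter_of_dominated_convergence (fun x => φ x * ENNReal.ofReal B)
    (Eventually.of_forall fun ε => hφ.mul (measurable_convF hM ε hg).ennreal_ofReal)
    (eventually_mem_nhdsWithin.mono fun _ hε => Eventually.of_forall fun x =>
      mul_le_mul_right (ENNReal.ofReal_le_ofReal
        ((le_abs_self _).trans (abs_convF_le hM hε hB x))) _)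
    ?_ ?_
  · rw [lintegral_mul_const _ hφ]
    exact ENNReal.mul_ne_top hfin ENNReal.ofReal_ne_top
  · filter_upwards [ae_lt_top hφ hfin] with x hx
    exact ENNReal.Tendsto.const_mul
      ((ENNReal.continuous_ofReal.tendsto _).comp (tendsto_convF hM hg hB x)) (Or.inr hx.ne)

lemma ofReal_convF {d : ℕ} {ζ : Ed d → ℝ} (hM : AssumptionM ζ) {ε : ℝ} (hε : 0 < ε)
    {g : Ed d → ℝ} (hg : Continuous g) {B : ℝ} (hB : ∀ x, |g x| ≤ B) (h0 : ∀ x, 0 ≤ g x)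
    (x : Ed d) :
    ENNReal.ofReal (convF ζ ε g x)
      = ∫⁻ y, ENNReal.ofReal (zE ζ ε (x - y)) * ENNReal.ofReal (g y) := by
  unfold convF
  rw [ofReal_integral_eq_lintegral_ofReal]
  · simp_rw [ENNReal.ofReal_mul (zE_nonneg hM hε _)]
  · exact (zE_integrable hM hε x).mul_bdd hg.aestronglyMeasurable (Eventually.of_forall hB)
  · exact Eventually.of_forall fun y => mul_nonneg (zE_nonneg hM hε _) (h0 y)

/-- Tonelli's theorem together with evenness of `ζ`: the mollification of `φ μ`, paired with `g`
against Lebesgue measure, equals `φ μ` paired with the mollification of `g`. -/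
lemma lintegral_convF_swap {d : ℕ} {ζ : Ed d → ℝ} (hM : AssumptionM ζ) {ε : ℝ} (hε : 0 < ε)
    {g : Ed d → ℝ} (hg : Continuous g) {B : ℝ} (hB : ∀ x, |g x| ≤ B) (h0 : ∀ x, 0 ≤ g x)
    (μ : Measure (Ed d)) [SFinite μ] {φ : Ed d → ℝ≥0∞} (hφ : Measurable φ) :
    ∫⁻ x, (∫⁻ y, ENNReal.ofReal (zE ζ ε (x - y)) * φ y ∂μ) * ENNReal.ofReal (g x)
      = ∫⁻ y, φ y * ENNReal.ofReal (convF ζ ε g y) ∂μ := by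
  have hc := zE_continuous hM ε
  have hk : Measurable fun p : Ed d × Ed d => ENNReal.ofReal (zE ζ ε (p.1 - p.2)) :=
    (by fun_prop : Continuous fun p : Ed d × Ed d => zE ζ ε (p.1 - p.2)).measurable.ennreal_ofReal
  have hk1 (x : Ed d) : Measurable fun y : Ed d => ENNReal.ofReal (zE ζ ε (x - y)) :=
    (by fun_prop : Continuous fun y : Ed d => zE ζ ε (x - y)).measurable.ennreal_ofReal
  have hgm := hg.measurable.ennreal_ofReal
  calc _ = ∫⁻ x, ∫⁻ y, ENNReal.ofReal (zE ζ ε (x - y)) * φ y * ENNReal.ofReal (g x) ∂μ := by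
        refine lintegral_congr fun x => ?_
        exact (lintegral_mul_const _ ((hk1 x).mul hφ)).symm
    _ = ∫⁻ y, ∫⁻ x, ENNReal.ofReal (zE ζ ε (x - y)) * φ y * ENNReal.ofReal (g x) ∂volume ∂μ :=
        lintegral_lintegral_swap
          (((hk.mul (hφ.comp measurable_snd)).mul (hgm.comp measurable_fst)).aemeasurable)
    _ = _ := by
        refine lintegral_congr fun y => ?_
        rw [ofReal_convF hM hε hg hB h0]
        refine Eq.trans (lintegral_congr fun x => ?_) (lintegral_const_mul _ ((hk1 y).mul hgm))
        rw [zE_sub_comm hM]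
        ring

/-! ### Lower bound by duality -/

/-- Young's inequality `g u ≤ u² / (2ρ̄) + g² ρ̄ / 2` for `u = ζ_ε * ρ`, integrated. -/
lemma lintegral_convF_le {d : ℕ} {ζ : Ed d → ℝ} (hM : AssumptionM ζ) {ρb : Ed d → ℝ}
    (hρb : Continuous ρb) (hpos : ∀ x, 0 < ρb x) (ρ : Measure (Ed d)) [IsProbabilityMeasure ρ]
    {g : Ed d → ℝ} (hg : Continuous g) {B : ℝ} (hB : ∀ x, |g x| ≤ B) (h0 : ∀ x, 0 ≤ g x)
    {ε : ℝ} (hε : 0 < ε) :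
    ∫⁻ x, ENNReal.ofReal (convF ζ ε g x) ∂ρ ≤ regEnergyE ζ ε ρb ρ
      + 2⁻¹ * ∫⁻ x, ENNReal.ofReal (g x) ^ 2 * ENNReal.ofReal (ρb x) := by
  have hsw := lintegral_convF_swap hM hε hg hB h0 ρ (φ := fun _ => 1) measurable_const
  simp only [mul_one, one_mul] at hsw
  have hum := measurable_convM hM ε ρ
  have hgm := hg.measurable
  have hρm := hρb.measurable
  rw [← hsw, regEnergyE, ← mul_add, ← lintegral_add_left (by fun_prop),
    ← lintegral_const_mul _ (by fun_prop)]
  refine lintegral_mono fun x => ?_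
  rw [← ofReal_convM hM hε]
  have hu := convM_nonneg hM hε ρ x
  set u := convM ζ ε ρ x
  have hp := hpos x
  have h2 : (2⁻¹ : ℝ≥0∞) = ENNReal.ofReal 2⁻¹ := by
    rw [ENNReal.ofReal_inv_of_pos two_pos, ENNReal.ofReal_ofNat]
  rw [h2, ← ENNReal.ofReal_pow (h0 x), ← ENNReal.ofReal_mul hu,
    ← ENNReal.ofReal_mul (by positivity), ← ENNReal.ofReal_add (by positivity) (by positivity),
    ← ENNReal.ofReal_mul (by positivity)]
  refine ENNReal.ofReal_le_ofReal ?_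
  have : 2⁻¹ * (u ^ 2 / ρb x + g x ^ 2 * ρb x) - u * g x
      = 2⁻¹ * (u - g x * ρb x) ^ 2 / ρb x := by
    field_simp
    ring
  have h3 : 0 ≤ 2⁻¹ * (u - g x * ρb x) ^ 2 / ρb x := by positivity
  linarith

lemma eLpNorm_two_sq {α : Type*} [MeasurableSpace α] (μ : Measure α) (f : α → ℝ) :
    eLpNorm f 2 μ ^ 2 = ∫⁻ x, ‖f x‖ₑ ^ 2 ∂μ := by
  have := eLpNorm_nnreal_pow_eq_lintegral (f := f) (μ := μ) (p := 2) two_ne_zero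
  simpa using this

/-- The duality bound for bounded continuous test functions. -/
lemma eLpNorm_le_liminf_of_continuous {d : ℕ} {ζ : Ed d → ℝ} (hM : AssumptionM ζ) {ρb : Ed d → ℝ}
    (hρb : Continuous ρb) (hpos : ∀ x, 0 < ρb x) (ρ : Measure (Ed d)) [IsProbabilityMeasure ρ]
    {g : Ed d → ℝ} (hg : Continuous g) {B : ℝ} (hB : ∀ x, |g x| ≤ B) :
    eLpNorm g 1 ρ ≤ liminf (fun ε => regEnergyE ζ ε ρb ρ) (𝓝[>] 0)
      + 2⁻¹ * eLpNorm g 2 (volume.withDensity fun x => ENNReal.ofReal (ρb x)) ^ 2 := by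
  have hK : eLpNorm g 2 (volume.withDensity fun x => ENNReal.ofReal (ρb x)) ^ 2
      = ∫⁻ x, ENNReal.ofReal |g x| ^ 2 * ENNReal.ofReal (ρb x) := by
    rw [eLpNorm_two_sq, lintegral_withDensity_eq_lintegral_mul _ (by fun_prop) (by fun_prop)]
    refine lintegral_congr fun x => ?_
    simp [Real.enorm_eq_ofReal_abs, mul_comm]
  have hL : eLpNorm g 1 ρ = ∫⁻ x, 1 * ENNReal.ofReal |g x| ∂ρ := by
    rw [eLpNorm_one_eq_lintegral_enorm]
    refine lintegral_congr fun x => ?_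
    rw [Real.enorm_eq_ofReal_abs, one_mul]
  rw [hK, hL]
  set K := 2⁻¹ * ∫⁻ x, ENNReal.ofReal |g x| ^ 2 * ENNReal.ofReal (ρb x) with hKdef
  rcases eq_or_ne K ⊤ with hKt | hKt
  · simp [hKt]
  have hB' : ∀ x, |(|g x|)| ≤ B := fun x => by rw [abs_abs]; exact hB x
  have hlim := tendsto_lintegral_convF hM hg.abs hB' ρ (φ := fun _ => 1) measurable_const
    (by simp)
  have hlim2 := ENNReal.Tendsto.sub hlim (tendsto_const_nhds (x := K)) (Or.inr hKt)
  rw [← tsub_le_iff_right, ← hlim2.liminf_eq]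
  refine liminf_le_liminf (eventually_mem_nhdsWithin.mono fun ε hε => ?_)
  simp only [one_mul]
  exact tsub_le_iff_right.2
    (lintegral_convF_le hM hρb hpos ρ hg.abs hB' (fun x => abs_nonneg _) hε)

lemma isLocallyFiniteMeasure_add_withDensity {d : ℕ} {ρb : Ed d → ℝ} (hρb : Continuous ρb)
    (ρ : Measure (Ed d)) [IsProbabilityMeasure ρ] :
    IsLocallyFiniteMeasure (ρ + volume.withDensity fun x => ENNReal.ofReal (ρb x)) := by
  have : IsLocallyFiniteMeasure ((volume : Measure (Ed d)).withDensity
    fun x => ENNReal.ofReal (ρb x)) := IsLocallyFiniteMeasure.withDensity_ofReal hρb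
  refine ⟨fun x => ?_⟩
  obtain ⟨s, hs, hlt⟩ := (volume.withDensity fun x => ENNReal.ofReal (ρb x)).finiteAt_nhds x
  exact ⟨s, hs, by simpa using hlt⟩

/-- The duality bound for arbitrary test functions in `L²(ρ + ρ̄ dx)`. Approximating in this space
controls both the pairing with `ρ` and the quadratic term, so that `ρ` may be singular. -/
lemma eLpNorm_le_liminf {d : ℕ} {ζ : Ed d → ℝ} (hM : AssumptionM ζ) {ρb : Ed d → ℝ}
    (hρb : Continuous ρb) (hpos : ∀ x, 0 < ρb x) (ρ : Measure (Ed d)) [IsProbabilityMeasure ρ]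
    {h : Ed d → ℝ}
    (hh : MemLp h 2 (ρ + volume.withDensity fun x => ENNReal.ofReal (ρb x))) :
    eLpNorm h 1 ρ ≤ liminf (fun ε => regEnergyE ζ ε ρb ρ) (𝓝[>] 0)
      + 2⁻¹ * eLpNorm h 2 (volume.withDensity fun x => ENNReal.ofReal (ρb x)) ^ 2 := by
  set σ : Measure (Ed d) := volume.withDensity fun x => ENNReal.ofReal (ρb x) with hσ
  set L := liminf (fun ε => regEnergyE ζ ε ρb ρ) (𝓝[>] 0)
  have : IsLocallyFiniteMeasure (ρ + σ) := isLocallyFiniteMeasure_add_withDensity hρb ρ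
  have key : ∀ δ : ℝ≥0∞, 0 < δ → eLpNorm h 1 ρ ≤ L + 2⁻¹ * (eLpNorm h 2 σ + δ) ^ 2 + δ := by
    intro δ hδ
    obtain ⟨g, hgc, B, hB, hgδ⟩ : ∃ g : Ed d → ℝ, Continuous g ∧ ∃ B, (∀ x, |g x| ≤ B) ∧
        eLpNorm (h - g) 2 (ρ + σ) ≤ δ := by
      obtain ⟨g, hgδ, -⟩ := hh.exists_boundedContinuous_eLpNorm_sub_le (by simp) hδ.ne'
      exact ⟨g, g.continuous, ‖g‖, g.norm_coe_le_norm, hgδ⟩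
    have hρσ : ρ ≤ ρ + σ := Measure.le_add_right le_rfl
    have hσρ : σ ≤ ρ + σ := Measure.le_add_left le_rfl
    have hm := hh.aestronglyMeasurable
    have h1 : eLpNorm h 1 ρ ≤ eLpNorm g 1 ρ + δ := by
      have e : h = g + (h - g) := by simp
      calc eLpNorm h 1 ρ = eLpNorm (g + (h - g)) 1 ρ := by rw [← e]
        _ ≤ eLpNorm g 1 ρ + eLpNorm (h - g) 1 ρ :=
          eLpNorm_add_le hgc.aestronglyMeasurable
            ((hm.mono_measure hρσ).sub hgc.aestronglyMeasurable) le_rfl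
        _ ≤ eLpNorm g 1 ρ + eLpNorm (h - g) 2 ρ := by
          gcongr
          exact eLpNorm_le_eLpNorm_of_exponent_le one_le_two
            ((hm.mono_measure hρσ).sub hgc.aestronglyMeasurable)
        _ ≤ _ := by
          gcongr
          exact (eLpNorm_mono_measure _ hρσ).trans hgδ
    have h2 : eLpNorm g 2 σ ≤ eLpNorm h 2 σ + δ := by
      have e : g = h - (h - g) := by simp
      calc eLpNorm g 2 σ = eLpNorm (h - (h - g)) 2 σ := by rw [← e]
        _ ≤ eLpNorm h 2 σ + eLpNorm (h - g) 2 σ :=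
          eLpNorm_sub_le (hm.mono_measure hσρ)
            ((hm.mono_measure hσρ).sub hgc.aestronglyMeasurable) one_le_two
        _ ≤ _ := by
          gcongr
          exact (eLpNorm_mono_measure _ hσρ).trans hgδ
    have h3 := eLpNorm_le_liminf_of_continuous hM hρb hpos ρ hgc hB
    refine h1.trans ?_
    gcongr
    refine h3.trans ?_
    gcongr
  have hcont : Continuous fun δ : ℝ≥0∞ => L + 2⁻¹ * (eLpNorm h 2 σ + δ) ^ 2 + δ := by
    refine Continuous.add (continuous_const.add
      ((ENNReal.continuous_const_mul (by simp)).comp ?_)) continuous_id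
    exact (ENNReal.continuous_pow 2).comp (continuous_const.add continuous_id)
  have ht := (hcont.tendsto 0).mono_left (nhdsWithin_le_nhds (s := Set.Ioi 0))
  simp only [add_zero] at ht
  exact ge_of_tendsto ht (eventually_mem_nhdsWithin.mono key)

lemma intEnergy_le_liminf {d : ℕ} {ζ : Ed d → ℝ} (hM : AssumptionM ζ) {ρb : Ed d → ℝ}
    (hρb : Continuous ρb) (hpos : ∀ x, 0 < ρb x) (ρ : Measure (Ed d)) [IsProbabilityMeasure ρ] :
    intEnergy ρb ρ ≤ liminf (fun ε => regEnergyE ζ ε ρb ρ) (𝓝[>] 0) := by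
  have key := fun h => eLpNorm_le_liminf hM hρb hpos ρ (h := h)
  set L := liminf (fun ε => regEnergyE ζ ε ρb ρ) (𝓝[>] 0)
  set σ : Measure (Ed d) := volume.withDensity fun x => ENNReal.ofReal (ρb x) with hσ
  have hσac : σ ≪ volume := withDensity_absolutelyContinuous _ _
  have : IsLocallyFiniteMeasure (ρ + σ) := isLocallyFiniteMeasure_add_withDensity hρb ρ
  have hρm := hρb.measurable
  unfold intEnergy
  split_ifs with hac
  · set f := ρ.rnDeriv volume
    have hf : Measurable f := Measure.measurable_rnDeriv _ _
    -- The optimal test function is `f / ρ̄`, truncated to be bounded with bounded support.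
    let w : Ed d → ℝ := fun x => (f x).toReal / ρb x
    have hw : Measurable w := by fun_prop
    have hw0 : ∀ x, 0 ≤ w x := fun x => div_nonneg ENNReal.toReal_nonneg (hpos x).le
    let A : ℕ → Set (Ed d) := fun n => {x | w x ≤ n} ∩ closedBall 0 n
    have hA : ∀ n, MeasurableSet (A n) := fun n =>
      (measurableSet_le hw measurable_const).inter isClosed_closedBall.measurableSet
    have hAmono : Monotone A := fun m n hmn => Set.inter_subset_inter
      (fun x hx => le_trans (Set.mem_ofPred.1 hx) (by exact_mod_cast hmn))
      (closedBall_subset_closedBall (by exact_mod_cast hmn))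
    have hAun : ⋃ n, A n = Set.univ := by
      refine Set.eq_univ_of_forall fun x => ?_
      obtain ⟨n, hn⟩ := exists_nat_ge (max (w x) ‖x‖)
      exact Set.mem_iUnion.2 ⟨n, (le_max_left _ _).trans hn, by simpa using (le_max_right _ _).trans hn⟩
    rw [← setLIntegral_univ, ← hAun, setLIntegral_iUnion_of_directed _ hAmono.directed_le,
      ENNReal.mul_iSup]
    refine iSup_le fun n => ?_
    let h : Ed d → ℝ := (A n).indicator w
    have hhm : Measurable h := hw.indicator (hA n)
    have hfinA : (ρ + σ) (A n) < ⊤ :=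
      (measure_mono Set.inter_subset_right).trans_lt (isCompact_closedBall 0 (n : ℝ)).measure_lt_top
    have hmem : MemLp h 2 (ρ + σ) := by
      rw [memLp_indicator_iff_restrict (hA n)]
      have : IsFiniteMeasure ((ρ + σ).restrict (A n)) := ⟨by simpa using hfinA⟩
      refine MemLp.of_bound hw.aestronglyMeasurable n ?_
      filter_upwards [ae_restrict_mem (hA n)] with x hx
      rw [Real.norm_of_nonneg (hw0 x)]
      exact hx.1
    set I := ∫⁻ x in A n, f x ^ 2 / ENNReal.ofReal (ρb x)
    have hftop : ∀ᵐ x, f x < ⊤ := Measure.rnDeriv_lt_top ρ volume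
    have hwe : ∀ x, f x < ⊤ → ‖w x‖ₑ = f x / ENNReal.ofReal (ρb x) := by
      intro x hx
      rw [Real.enorm_of_nonneg (hw0 x), ENNReal.ofReal_div_of_pos (hpos x),
        ENNReal.ofReal_toReal hx.ne]
    have e1 : eLpNorm h 1 ρ = I := by
      rw [eLpNorm_one_eq_lintegral_enorm, ← lintegral_rnDeriv_mul hac (by fun_prop),
        show I = ∫⁻ x, (A n).indicator (fun x => f x ^ 2 / ENNReal.ofReal (ρb x)) x from
          (lintegral_indicator (hA n) _).symm]
      refine lintegral_congr_ae (hftop.mono fun x hx => ?_)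
      by_cases hxA : x ∈ A n
      · simp only [h, Set.indicator_of_mem hxA]
        rw [hwe x hx, sq, mul_div_assoc]
      · simp [h, Set.indicator_of_notMem hxA]
    have e2 : eLpNorm h 2 σ ^ 2 = I := by
      rw [eLpNorm_two_sq, lintegral_withDensity_eq_lintegral_mul _ (by fun_prop) (by fun_prop),
        show I = ∫⁻ x, (A n).indicator (fun x => f x ^ 2 / ENNReal.ofReal (ρb x)) x from
          (lintegral_indicator (hA n) _).symm]
      refine lintegral_congr_ae (hftop.mono fun x hx => ?_)
      by_cases hxA : x ∈ A n
      · simp only [h, Set.indicator_of_mem hxA, Pi.mul_apply]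
        have h0 : ENNReal.ofReal (ρb x) ≠ 0 := by simpa using hpos x
        rw [hwe x hx, sq, sq, mul_comm, mul_assoc, ENNReal.div_mul_cancel h0 ENNReal.ofReal_ne_top,
          mul_comm, mul_div_assoc]
      · simp [h, Set.indicator_of_notMem hxA]
    have hk := key h hmem
    have hI : I ≠ ⊤ := by
      rw [← e2]
      exact ENNReal.pow_ne_top
        (((eLpNorm_mono_measure _ (Measure.le_add_left le_rfl)).trans_lt hmem.2).ne)
    rw [e1, e2] at hk
    have hhalf : I = 2⁻¹ * I + 2⁻¹ * I := by
      rw [← add_mul, ENNReal.inv_two_add_inv_two, one_mul]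
    have hfin : 2⁻¹ * I ≠ ⊤ := ENNReal.mul_ne_top (by simp) hI
    nth_rewrite 1 [hhalf] at hk
    exact (ENNReal.add_le_add_iff_right hfin).1 hk
  · -- A Lebesgue-null set charged by `ρ` gives test functions with no quadratic cost.
    obtain ⟨A, hA, hA0, hρA⟩ : ∃ A, MeasurableSet A ∧ volume A = 0 ∧ ρ A ≠ 0 := by
      by_contra! hcon
      exact hac (Measure.AbsolutelyContinuous.mk fun s hs h0 => hcon s hs h0)
    have hσA : σ A = 0 := hσac hA0
    have hb : ∀ n : ℕ, (n : ℝ≥0∞) * ρ A ≤ L := by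
      intro n
      have hmem : MemLp (A.indicator fun _ => (n : ℝ)) 2 (ρ + σ) :=
        memLp_indicator_const 2 hA _ (Or.inr (by simp [hσA]))
      have hk := key _ hmem
      rw [eLpNorm_indicator_const hA (by simp) (by simp),
        eLpNorm_indicator_const hA (by simp) (by simp), hσA] at hk
      simpa using hk
    have htop : (⊤ : ℝ≥0∞) * ρ A ≤ L := by
      rw [← ENNReal.iSup_natCast, ENNReal.iSup_mul]
      exact iSup_le hb
    rwa [ENNReal.top_mul hρA] at htop

/-! ### Upper bound by Jensen's inequality -/

/-- Jensen's inequality for the probability density `ζ_ε(x - ·)`. -/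
lemma sq_lintegral_zE_le {d : ℕ} {ζ : Ed d → ℝ} (hM : AssumptionM ζ) {ε : ℝ} (hε : 0 < ε)
    {f : Ed d → ℝ≥0∞} (hf : Measurable f) (x : Ed d) :
    (∫⁻ y, ENNReal.ofReal (zE ζ ε (x - y)) * f y) ^ 2
      ≤ ∫⁻ y, ENNReal.ofReal (zE ζ ε (x - y)) * f y ^ 2 := by
  have hc := zE_continuous hM ε
  have hk : Measurable fun y : Ed d => ENNReal.ofReal (zE ζ ε (x - y)) :=
    (by fun_prop : Continuous fun y : Ed d => zE ζ ε (x - y)).measurable.ennreal_ofReal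
  set m : Measure (Ed d) := volume.withDensity fun y => ENNReal.ofReal (zE ζ ε (x - y)) with hm
  have hm1 : m Set.univ = 1 := by
    rw [hm, withDensity_apply _ MeasurableSet.univ, setLIntegral_univ, lintegral_zE hM hε]
  have e1 : ∫⁻ y, f y ∂m = ∫⁻ y, ENNReal.ofReal (zE ζ ε (x - y)) * f y :=
    lintegral_withDensity_eq_lintegral_mul _ hk hf
  have e2 : ∫⁻ y, f y ^ 2 ∂m = ∫⁻ y, ENNReal.ofReal (zE ζ ε (x - y)) * f y ^ 2 :=
    lintegral_withDensity_eq_lintegral_mul _ hk (hf.pow_const 2)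
  rw [← e1, ← e2]
  have h := ENNReal.lintegral_mul_le_Lp_mul_Lq m Real.HolderConjugate.two_two
    hf.aemeasurable (g := fun _ => 1) aemeasurable_const
  simp only [Pi.mul_apply, mul_one, lintegral_const, hm1, ENNReal.rpow_ofNat, one_pow,
    ENNReal.one_rpow] at h
  calc _ ≤ ((∫⁻ y, f y ^ 2 ∂m) ^ (1 / 2 : ℝ)) ^ 2 := by gcongr
    _ = _ := by
      rw [← ENNReal.rpow_natCast, ← ENNReal.rpow_mul]
      norm_num

lemma limsup_le_intEnergy {d : ℕ} {ζ : Ed d → ℝ} (hM : AssumptionM ζ) {ρb : Ed d → ℝ}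
    (hT : AssumptionT ρb) (ρ : Measure (Ed d)) [IsProbabilityMeasure ρ] :
    limsup (fun ε => regEnergyE ζ ε ρb ρ) (𝓝[>] 0) ≤ intEnergy ρb ρ := by
  obtain ⟨hρ1, C, hC, hb⟩ := hT
  have hρb := hρ1.continuous
  have hpos : ∀ x, 0 < ρb x := fun x => (inv_pos.2 hC).trans_le (hb x).1
  have hρm := hρb.measurable
  unfold intEnergy
  split_ifs with hac
  swap
  · exact le_top
  set f := ρ.rnDeriv volume with hfdef
  have hf : Measurable f := Measure.measurable_rnDeriv _ _
  have hdiv : ∀ x, f x ^ 2 / ENNReal.ofReal (ρb x) = f x ^ 2 * ENNReal.ofReal (ρb x)⁻¹ := fun x => by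
    rw [ENNReal.ofReal_inv_of_pos (hpos x), div_eq_mul_inv]
  simp only [hdiv]
  rcases eq_or_ne (∫⁻ x, f x ^ 2 * ENNReal.ofReal (ρb x)⁻¹) ⊤ with htop | htop
  · rw [htop, ENNReal.mul_top (by simp)]
    exact le_top
  have hginv : Continuous fun x => (ρb x)⁻¹ := hρb.inv₀ fun x => (hpos x).ne'
  have hg0 : ∀ x, 0 ≤ (ρb x)⁻¹ := fun x => (inv_pos.2 (hpos x)).le
  have hgB : ∀ x, |(ρb x)⁻¹| ≤ C := fun x => by
    rw [abs_of_nonneg (hg0 x)]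
    exact inv_le_of_inv_le₀ hC (hb x).1
  have hfin : ∫⁻ x, f x ^ 2 ≠ ⊤ := by
    have hle : ∫⁻ x, f x ^ 2 ≤ ∫⁻ x, ENNReal.ofReal C * (f x ^ 2 * ENNReal.ofReal (ρb x)⁻¹) := by
      refine lintegral_mono fun x => ?_
      have : 1 ≤ ENNReal.ofReal C * ENNReal.ofReal (ρb x)⁻¹ := by
        rw [← ENNReal.ofReal_mul hC.le, ENNReal.one_le_ofReal, ← div_eq_mul_inv,
          one_le_div (hpos x)]
        exact (hb x).2
      calc f x ^ 2 = f x ^ 2 * 1 := (mul_one _).symm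
        _ ≤ f x ^ 2 * (ENNReal.ofReal C * ENNReal.ofReal (ρb x)⁻¹) := by gcongr
        _ = _ := by ring
    rw [lintegral_const_mul _ (by fun_prop)] at hle
    exact (hle.trans_lt (ENNReal.mul_lt_top ENNReal.ofReal_lt_top htop.lt_top)).ne
  have hlim := tendsto_lintegral_convF hM hginv hgB volume (hf.pow_const 2) hfin
  have hlim2 := ENNReal.Tendsto.const_mul (a := 2⁻¹) hlim (Or.inr (by simp))
  rw [← hlim2.limsup_eq]
  refine limsup_le_limsup (eventually_mem_nhdsWithin.mono fun ε hε => ?_)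
  have hε : 0 < ε := hε
  have hc := zE_continuous hM ε
  unfold regEnergyE
  simp only
  rw [← lintegral_convF_swap hM hε hginv hgB hg0 volume (hf.pow_const 2)]
  gcongr with x
  rw [div_eq_mul_inv, ENNReal.ofReal_mul (sq_nonneg _),
    ENNReal.ofReal_pow (convM_nonneg hM hε ρ x), ofReal_convM hM hε]
  gcongr
  rw [← lintegral_rnDeriv_mul hac
    (by fun_prop : Continuous fun y => zE ζ ε (x - y)).measurable.ennreal_ofReal.aemeasurable]
  simp only [mul_comm (ρ.rnDeriv volume _)]
  exact sq_lintegral_zE_le hM hε hf x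

/-- pointwise convergence of `E_ε + 𝒱_ε` to `E + 𝒱` as `ε → 0`, in the
extended reals. -/
theorem regEnergy_potential_tendsto (d : ℕ) (hd : 1 ≤ d) (ρb : Ed d → ℝ) (hT : AssumptionT ρb)
    (ζ : Ed d → ℝ) (hM : AssumptionM ζ) (V : Ed d → ℝ) (hV : AssumptionV V)
    (ρ : Measure (Ed d)) (hρ : IsProbabilityMeasure ρ) :
    Tendsto
      (fun ε : ℝ => (regEnergyE ζ ε ρb ρ : EReal) + ((∫ x, convF ζ ε V x ∂ρ : ℝ) : EReal))
      (𝓝[>] (0 : ℝ))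
      (𝓝 ((intEnergy ρb ρ : EReal) + ((∫ x, V x ∂ρ : ℝ) : EReal))) := by
  obtain ⟨C, hC, hb⟩ := hT.2
  have hpos : ∀ x, 0 < ρb x := fun x => (inv_pos.2 hC).trans_le (hb x).1
  have hE : Tendsto (fun ε => regEnergyE ζ ε ρb ρ) (𝓝[>] 0) (𝓝 (intEnergy ρb ρ)) :=
    tendsto_of_le_liminf_of_limsup_le (intEnergy_le_liminf hM hT.1.continuous hpos ρ)
      (limsup_le_intEnergy hM hT ρ)
  obtain ⟨B, hB⟩ := hV.2.2.1
  have hVlim := tendsto_integral_convF hM hV.1.continuous hB ρ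
  have hadd := EReal.continuousAt_add
    (p := ((intEnergy ρb ρ : EReal), ((∫ x, V x ∂ρ : ℝ) : EReal)))
    (Or.inr (EReal.coe_ne_bot _)) (Or.inr (EReal.coe_ne_top _))
  exact hadd.tendsto.comp
    (((continuous_coe_ennreal_ereal.tendsto _).comp hE).prodMk_nhds
      ((continuous_coe_real_ereal.tendsto _).comp hVlim))

end
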